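/- Let f : (X, 𝒯) → (Y, 𝒰) be a function between fuzzy topological spaces. Then f is a somewhat fuzzy open function if and only if f is a somewhat fuzzy semiopen function. -/

import Mathlib

open unitInterval

/-- `Fact` instance making the unit interval `I = [0,1]` a complete lattice. -/
instance : Fact ((0:ℝ) ≤ 1) := ⟨zero_le_one⟩

namespace SomewhatFuzzy

variable {X Y : Type*}

/-- A fuzzy topology on `X` is a collection `T` of fuzzy sets (functions `X → [0,1]`,
ordered pointwise) containing the constant functions `0` and `1`, closed under
pointwise minimum of two members, and closed under pointwise supremum of any
subfamily. -/
def IsFuzzyTopology (T : Set (X → I)) : Prop :=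
  (fun _ => (0 : I)) ∈ T ∧ (fun _ => (1 : I)) ∈ T ∧
    (∀ μ ν, μ ∈ T → ν ∈ T → (fun x => μ x ⊓ ν x) ∈ T) ∧
    (∀ S : Set (X → I), S ⊆ T → (fun x => ⨆ μ ∈ S, μ x) ∈ T)

/-- The fuzzy interior of `l`: the pointwise supremum of all fuzzy open sets `≤ l`. -/
noncomputable def fInterior (T : Set (X → I)) (l : X → I) : X → I :=
  fun x => ⨆ μ ∈ {μ : X → I | μ ∈ T ∧ μ ≤ l}, μ x

/-- A fuzzy set `μ` is fuzzy closed if `1 - μ` is fuzzy open. -/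
def IsFuzzyClosed (T : Set (X → I)) (μ : X → I) : Prop :=
  (fun x => unitInterval.symm (μ x)) ∈ T

/-- The fuzzy closure of `l`: the pointwise infimum of all fuzzy closed sets `≥ l`. -/
noncomputable def fClosure (T : Set (X → I)) (l : X → I) : X → I :=
  fun x => ⨅ μ ∈ {μ : X → I | IsFuzzyClosed T μ ∧ l ≤ μ}, μ x

/-- A fuzzy set `l` is fuzzy semiopen if `l ≤ Cl(Int(l))`. -/
def IsFuzzySemiopen (T : Set (X → I)) (l : X → I) : Prop :=
  l ≤ fClosure T (fInterior T l)

/-- The fuzzy semi-interior of `l`: the pointwise supremum of all fuzzy semiopen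
sets `≤ l`. -/
noncomputable def fSemiInterior (T : Set (X → I)) (l : X → I) : X → I :=
  fun x => ⨆ μ ∈ {μ : X → I | IsFuzzySemiopen T μ ∧ μ ≤ l}, μ x

/-- A fuzzy set `μ` is fuzzy semiclosed if `1 - μ` is fuzzy semiopen. -/
def IsFuzzySemiclosed (T : Set (X → I)) (μ : X → I) : Prop :=
  IsFuzzySemiopen T (fun x => unitInterval.symm (μ x))

/-- The fuzzy semi-closure of `l`: the pointwise infimum of all fuzzy semiclosed
sets `≥ l`. -/
noncomputable def fSemiClosure (T : Set (X → I)) (l : X → I) : X → I :=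
  fun x => ⨅ μ ∈ {μ : X → I | IsFuzzySemiclosed T μ ∧ l ≤ μ}, μ x

/-- A fuzzy set `l` is somewhat fuzzy open if `l = 0` or `Int(l) ≠ 0`. -/
def SomewhatFuzzyOpen (T : Set (X → I)) (l : X → I) : Prop :=
  l = (fun _ => (0 : I)) ∨ fInterior T l ≠ (fun _ => (0 : I))

/-- A fuzzy set `l` is somewhat fuzzy semiopen if `l = 0` or `Int_s(l) ≠ 0`. -/
def SomewhatFuzzySemiopen (T : Set (X → I)) (l : X → I) : Prop :=
  l = (fun _ => (0 : I)) ∨ fSemiInterior T l ≠ (fun _ => (0 : I))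

/-- Preimage of a fuzzy set under a function: `f⁻¹(β) = β ∘ f`. -/
def fPreimage (f : X → Y) (b : Y → I) : X → I := fun x => b (f x)

/-- Image of a fuzzy set under a function:
`f(α)(y) = sup {α x : f x = y}` (supremum over the empty set being `0`). -/
noncomputable def fImage (f : X → Y) (a : X → I) : Y → I :=
  fun y => ⨆ x ∈ {x : X | f x = y}, a x

/-- `f` is fuzzy continuous if the preimage of every fuzzy open set is fuzzy open. -/
def FuzzyContinuous (T : Set (X → I)) (U : Set (Y → I)) (f : X → Y) : Prop :=
  ∀ b ∈ U, fPreimage f b ∈ T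

/-- `f` is fuzzy semicontinuous if the preimage of every fuzzy open set is fuzzy
semiopen. -/
def FuzzySemicontinuous (T : Set (X → I)) (U : Set (Y → I)) (f : X → Y) : Prop :=
  ∀ b ∈ U, IsFuzzySemiopen T (fPreimage f b)

/-- `f` is somewhat fuzzy continuous if the preimage of every fuzzy open set is
somewhat fuzzy open. -/
def SomewhatFuzzyContinuous (T : Set (X → I)) (U : Set (Y → I)) (f : X → Y) : Prop :=
  ∀ b ∈ U, SomewhatFuzzyOpen T (fPreimage f b)

/-- `f` is somewhat fuzzy semicontinuous if the preimage of every fuzzy open set is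
somewhat fuzzy semiopen. -/
def SomewhatFuzzySemicontinuous (T : Set (X → I)) (U : Set (Y → I)) (f : X → Y) : Prop :=
  ∀ b ∈ U, SomewhatFuzzySemiopen T (fPreimage f b)

/-- `f` is a fuzzy open function if the image of every fuzzy open set is fuzzy open. -/
def FuzzyOpenMap (T : Set (X → I)) (U : Set (Y → I)) (f : X → Y) : Prop :=
  ∀ a ∈ T, fImage f a ∈ U

/-- `f` is a fuzzy semiopen function if the image of every fuzzy open set is fuzzy
semiopen. -/
def FuzzySemiopenMap (T : Set (X → I)) (U : Set (Y → I)) (f : X → Y) : Prop :=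
  ∀ a ∈ T, IsFuzzySemiopen U (fImage f a)

/-- `f` is a somewhat fuzzy open function if the image of every fuzzy open set is
somewhat fuzzy open. -/
def SomewhatFuzzyOpenMap (T : Set (X → I)) (U : Set (Y → I)) (f : X → Y) : Prop :=
  ∀ a ∈ T, SomewhatFuzzyOpen U (fImage f a)

/-- `f` is a somewhat fuzzy semiopen function if the image of every fuzzy open set is
somewhat fuzzy semiopen. -/
def SomewhatFuzzySemiopenMap (T : Set (X → I)) (U : Set (Y → I)) (f : X → Y) : Prop :=
  ∀ a ∈ T, SomewhatFuzzySemiopen U (fImage f a)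

theorem le_fInterior {T : Set (X → I)} {l μ : X → I} (h : μ ∈ T) (hl : μ ≤ l) :
    μ ≤ fInterior T l := fun x =>
  le_iSup₂_of_le (f := fun (μ : X → I) (_ : μ ∈ {μ : X → I | μ ∈ T ∧ μ ≤ l}) => μ x)
    μ ⟨h, hl⟩ le_rfl

theorem le_fSemiInterior {T : Set (X → I)} {l μ : X → I} (h : IsFuzzySemiopen T μ)
    (hl : μ ≤ l) : μ ≤ fSemiInterior T l := fun x =>
  le_iSup₂_of_le
    (f := fun (μ : X → I) (_ : μ ∈ {μ : X → I | IsFuzzySemiopen T μ ∧ μ ≤ l}) => μ x)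
    μ ⟨h, hl⟩ le_rfl

theorem le_fClosure (T : Set (X → I)) (l : X → I) : l ≤ fClosure T l := fun x =>
  le_iInf₂ (fun _ hμ => hμ.2 x)

theorem isFuzzySemiopen_of_mem {T : Set (X → I)} {μ : X → I} (h : μ ∈ T) :
    IsFuzzySemiopen T μ :=
  (le_fInterior h le_rfl).trans (le_fClosure T _)

theorem fInterior_mono (T : Set (X → I)) {l m : X → I} (h : l ≤ m) :
    fInterior T l ≤ fInterior T m := fun x =>
  iSup₂_le (fun _ hμ => le_fInterior hμ.1 (hμ.2.trans h) x)

theorem fInterior_le_fSemiInterior (T : Set (X → I)) (l : X → I) :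
    fInterior T l ≤ fSemiInterior T l := fun x =>
  iSup₂_le (fun _ hμ => le_fSemiInterior (isFuzzySemiopen_of_mem hμ.1) hμ.2 x)

theorem fClosure_le {T : Set (X → I)} {l μ : X → I} (h : IsFuzzyClosed T μ) (hl : l ≤ μ) :
    fClosure T l ≤ μ := fun x =>
  iInf₂_le_of_le (f := fun (μ : X → I) (_ : μ ∈ {μ : X → I | IsFuzzyClosed T μ ∧ l ≤ μ}) => μ x)
    μ ⟨h, hl⟩ le_rfl

theorem fInterior_eq_zero_iff {T : Set (X → I)} (hT : IsFuzzyTopology T) (l : X → I) :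
    fInterior T l = (fun _ => (0 : I)) ↔ fSemiInterior T l = (fun _ => (0 : I)) := by
  constructor
  · intro h
    refine le_antisymm (fun x => iSup₂_le ?_) (fun x => unitInterval.nonneg')
    intro μ hμ
    have h0 : IsFuzzyClosed T (fun _ => (0 : I)) := by
      simpa [IsFuzzyClosed] using hT.2.1
    exact (hμ.1.trans (fClosure_le h0 ((fInterior_mono T hμ.2).trans h.le))) x
  · intro h
    exact le_antisymm ((fInterior_le_fSemiInterior T l).trans h.le)
      (fun x => unitInterval.nonneg')

/-- Theorem 2.5(2): `f` is a somewhat fuzzy open function iff it is a somewhat fuzzy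
semiopen function. -/
theorem somewhatFuzzyOpenMap_iff_somewhatFuzzySemiopenMap
    {X Y : Type*} (T : Set (X → I)) (U : Set (Y → I))
    (hT : IsFuzzyTopology T) (hU : IsFuzzyTopology U) (f : X → Y) :
    SomewhatFuzzyOpenMap T U f ↔ SomewhatFuzzySemiopenMap T U f := by
  have key : ∀ l, SomewhatFuzzyOpen U l ↔ SomewhatFuzzySemiopen U l := fun l =>
    or_congr Iff.rfl (not_congr (fInterior_eq_zero_iff hU l))
  exact forall₂_congr (fun a _ => key _)

end SomewhatFuzzy
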